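/- Let E be a complex Banach space, A ∈ 𝒫(θ_A) and B ∈ 𝒫(θ_B) resolvent commuting with θ_A > θ_B and θ_A + θ_B > π, and let 𝒦 = (1/(2πi)) ∫_{Γ_{θ_B}} (A−z)⁻¹ (B+z)⁻¹ dz. Then for every w ∈ E one has the identity A⁻¹B⁻¹w = (A⁻¹ + B⁻¹)𝒦w. -/

import Mathlib

open Complex MeasureTheory Set Filter

noncomputable section

variable {E : Type*} [NormedAddCommGroup E] [NormedSpace ℂ E]

/-- `R ∈ ℒ(E)` is a (two-sided) bounded inverse of `A + lam`. -/
structure IsResolventAt (A : E →ₗ.[ℂ] E) (lam : ℂ) (R : E →L[ℂ] E) : Prop where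
  mem : ∀ y, R y ∈ A.domain
  right_inv : ∀ y, A ⟨R y, mem y⟩ + lam • R y = y
  left_inv : ∀ x : A.domain, R (A x + lam • (x : E)) = x

/-- The sector `S_θ = {z : |arg z| ≤ θ} ∪ {0}` (note `arg 0 = 0`). -/
def Sector (θ : ℝ) : Set ℂ := {z : ℂ | |z.arg| ≤ θ}

/-- `A ∈ 𝒫_K(θ)` with resolvent family `R`. -/
structure IsSectorial (A : E →ₗ.[ℂ] E) (θ : ℝ) (R : ℂ → E →L[ℂ] E) (K : ℝ) : Prop where
  one_le : 1 ≤ K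
  closed : A.IsClosed
  res : ∀ z ∈ Sector θ, IsResolventAt A z (R z)
  bound : ∀ z ∈ Sector θ, (1 + ‖z‖) * ‖R z‖ ≤ K

section Contours

variable {F : Type*} [NormedAddCommGroup F] [NormedSpace ℂ F]

/-- Integral over the ray `{ r e^{iθ} : r ≥ ρ }`, oriented outwards. -/
def rayIntegral (θ ρ : ℝ) (f : ℂ → F) : F :=
  ∫ r in Ioi ρ, Complex.exp (θ * I) • f (r * Complex.exp (θ * I))

/-- Integral over the positively oriented contour `Γ_θ = { r e^{± i θ} : r ≥ 0 }`
(coming in along the ray `e^{-iθ}` and leaving along `e^{iθ}`). -/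
def gammaIntegral (θ : ℝ) (f : ℂ → F) : F :=
  rayIntegral θ 0 f - rayIntegral (-θ) 0 f

/-- Integral over the arc `{ ρ e^{iφ} : θ₁ ≤ φ ≤ θ₂ }`, counterclockwise. -/
def arcIntegral (ρ θ₁ θ₂ : ℝ) (f : ℂ → F) : F :=
  ∫ φ in θ₁..θ₂, (I * ρ * Complex.exp (φ * I)) • f (ρ * Complex.exp (φ * I))

/-- Integral over the positively oriented contour
`Γ_{ρ,θ} = { ρ e^{iφ} : θ ≤ φ ≤ 2π-θ } ∪ { r e^{±iθ} : r ≥ ρ }`. -/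
def gammaRhoIntegral (ρ θ : ℝ) (f : ℂ → F) : F :=
  rayIntegral θ ρ f - rayIntegral (-θ) ρ f - arcIntegral ρ θ (2 * Real.pi - θ) f

/-- Integral over the reflected contour `-Γ_{ρ,θ}`. -/
def gammaRhoNegIntegral (ρ θ : ℝ) (f : ℂ → F) : F :=
  - gammaRhoIntegral ρ θ fun lam => f (-lam)

/-- Integral over the vertical line `iℝ - c`, oriented upwards. -/
def lineIntegral (c : ℝ) (f : ℂ → F) : F :=
  ∫ t : ℝ, I • f (t * I - c)

end Contours

/-- The operator `𝒦 = (1/(2πi)) ∫_{Γ_{θ_B}} (A-z)⁻¹ (B+z)⁻¹ dz` applied to `y`;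
here `RA (-z)` plays the role of `(A-z)⁻¹` and `RB z` of `(B+z)⁻¹`. -/
def Kop (RA RB : ℂ → E →L[ℂ] E) (θB : ℝ) (y : E) : E :=
  (2 * Real.pi * I : ℂ)⁻¹ • gammaIntegral θB fun z => RA (-z) (RB z y)

/-- The `K`-functional of the couple `(E, 𝒟(A))`, where `𝒟(A)` carries the graph norm. -/
def interpK (A : E →ₗ.[ℂ] E) (t : ℝ) (x : E) : ℝ :=
  ⨅ w : A.domain, (‖x - (w : E)‖ + t * (‖(w : E)‖ + ‖A w‖))

/-- Membership in the real interpolation space `(E, 𝒟(A))_{θ,q}`. -/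
def MemInterp (A : E →ₗ.[ℂ] E) (θ q : ℝ) (x : E) : Prop :=
  ∫⁻ t in Ioi (0 : ℝ), ENNReal.ofReal ((t ^ (-θ) * interpK A t x) ^ q / t) < ⊤

/-- Resolvent commutation for two sectorial operators. -/
def ResolventCommuting (RA RB : ℂ → E →L[ℂ] E) (θA θB : ℝ) : Prop :=
  ∃ lam ∈ Sector θA, ∃ mu ∈ Sector θB, Commute (RA lam) (RB mu)


open scoped Topology

section SectorGeometry

lemma exp_mem_sector {θ : ℝ} {w : ℂ} (hθ : θ < Real.pi) (hw : |w.im| ≤ θ) :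
    exp w ∈ Sector θ := by
  have h := abs_le.1 hw
  show |arg _| ≤ θ
  rwa [← log_im, log_exp (by linarith) (by linarith)]

lemma ofReal_mul_exp_mem_sector {θ φ r : ℝ} (hθ : θ < Real.pi) (hφ : |φ| ≤ θ) (hr : 0 < r) :
    (r * exp (φ * I) : ℂ) ∈ Sector θ := by
  have h := exp_mem_sector (w := Real.log r + φ * I) hθ (by simpa using hφ)
  rwa [exp_add, ← ofReal_exp, Real.exp_log hr] at h

lemma neg_mul_exp (r φ : ℝ) :
    -(r * exp (φ * I) : ℂ) = r * exp ((φ - Real.pi : ℝ) * I) := by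
  rw [ofReal_sub, sub_mul, exp_sub, exp_pi_mul_I]
  ring

/-- On a sector of half-angle less than `π`, `(1 + z)⁻¹` decays like `(1 + ‖z‖)⁻¹`. -/
lemma exists_bound_inv_one_add {θ : ℝ} (hθ0 : 0 ≤ θ) (hθ : θ < Real.pi) :
    ∃ M : ℝ, 0 ≤ M ∧ ∀ z ∈ Sector θ, 1 + z ≠ 0 ∧ (1 + ‖z‖) * ‖(1 + z)⁻¹‖ ≤ M := by
  set m := Real.cos θ
  have hm : -1 < m := by
    have := Real.cos_lt_cos_of_nonneg_of_le_pi hθ0 le_rfl hθ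
    rwa [Real.cos_pi] at this
  have hm1 : m ≤ 1 := Real.cos_le_one θ
  set c := √((1 + m) / 2)
  have hc : 0 < c := Real.sqrt_pos.2 (by linarith)
  have hc2 : c ^ 2 = (1 + m) / 2 := Real.sq_sqrt (by linarith)
  refine ⟨c⁻¹, by positivity, fun z hz => ?_⟩
  have hcos : m ≤ Real.cos z.arg := by
    rw [← Real.cos_abs z.arg]
    exact Real.cos_le_cos_of_nonneg_of_le_pi (abs_nonneg _) hθ.le hz
  have hre : ‖z‖ * m ≤ z.re := by
    rw [← norm_mul_cos_arg z]
    gcongr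
  have hsq : ‖1 + z‖ ^ 2 = 1 + 2 * z.re + ‖z‖ ^ 2 := by
    rw [Complex.sq_norm, Complex.sq_norm, normSq_apply, normSq_apply]
    simp
    ring
  have hle : c * (1 + ‖z‖) ≤ ‖1 + z‖ := by
    refine le_of_sq_le_sq ?_ (norm_nonneg _)
    rw [mul_pow, hc2, hsq]
    nlinarith [mul_nonneg (sub_nonneg.2 hm1) (sq_nonneg (1 - ‖z‖))]
  have hpos : 0 < ‖1 + z‖ := lt_of_lt_of_le (by positivity) hle
  refine ⟨norm_pos_iff.1 hpos, ?_⟩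
  rw [norm_inv, ← div_eq_mul_inv, div_le_iff₀ hpos, inv_mul_eq_div, le_div_iff₀ hc]
  linarith

end SectorGeometry

section RayIntegrals

variable {F : Type*} [NormedAddCommGroup F] [NormedSpace ℂ F]

lemma norm_ofReal_mul_exp {r : ℝ} (φ : ℝ) (hr : 0 ≤ r) : ‖(r * exp (φ * I) : ℂ)‖ = r := by
  rw [norm_mul, norm_exp_ofReal_mul_I, mul_one, norm_real, Real.norm_of_nonneg hr]

/-- A continuous function on the positive half-line that is `O((1 + r)⁻²)` is integrable. -/
lemma integrableOn_Ioi_of_norm_le {F : Type*} [NormedAddCommGroup F] {g : ℝ → F} {C : ℝ}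
    (hg : ContinuousOn g (Ioi 0))
    (hC : ∀ r ∈ Ioi (0 : ℝ), (1 + r) ^ 2 * ‖g r‖ ≤ C) : IntegrableOn g (Ioi 0) := by
  refine ((integrable_inv_one_add_sq.const_mul C).integrableOn (s := Ioi 0)).mono'
    (hg.aestronglyMeasurable measurableSet_Ioi) ?_
  refine (ae_restrict_iff' measurableSet_Ioi).2 (ae_of_all _ fun r (hr : 0 < r) => ?_)
  rw [← div_eq_mul_inv, le_div_iff₀ (by positivity)]
  refine le_trans ?_ (hC r hr)
  rw [mul_comm]
  gcongr
  nlinarith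

lemma integrableOn_ray {f : ℂ → F} {θ φ C : ℝ} (hθ : θ < Real.pi) (hφ : |φ| ≤ θ)
    (hf : ContinuousOn f (Sector θ)) (hC : ∀ z ∈ Sector θ, (1 + ‖z‖) ^ 2 * ‖f z‖ ≤ C) :
    IntegrableOn (fun r : ℝ => exp (φ * I) • f (r * exp (φ * I))) (Ioi 0) := by
  refine integrableOn_Ioi_of_norm_le (C := C) ?_ fun r (hr : 0 < r) => ?_
  · refine ContinuousOn.const_smul (hf.comp (by fun_prop) fun r hr => ?_) _
    exact ofReal_mul_exp_mem_sector hθ hφ hr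
  · have := hC _ (ofReal_mul_exp_mem_sector hθ hφ hr)
    rw [norm_ofReal_mul_exp φ hr.le] at this
    rwa [norm_smul, norm_exp_ofReal_mul_I, one_mul]

lemma image_exp_univ : Real.exp '' univ = Ioi 0 := by
  rw [image_univ, Real.range_exp]

/-- The ray integral in logarithmic coordinates. -/
lemma rayIntegral_eq_integral_exp (φ : ℝ) (f : ℂ → F) :
    rayIntegral φ 0 f = ∫ x : ℝ, exp (x + φ * I) • f (exp (x + φ * I)) := by
  rw [rayIntegral, ← image_exp_univ, integral_image_eq_integral_abs_deriv_smul MeasurableSet.univ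
    (fun x _ => (Real.hasDerivAt_exp x).hasDerivWithinAt) Real.exp_injective.injOn,
    setIntegral_univ]
  refine integral_congr_ae (ae_of_all _ fun x => ?_)
  simp only [Real.abs_exp, ofReal_exp, exp_add]
  rw [mul_smul, ← ofReal_exp]
  exact (coe_smul _ _).symm

lemma integrable_exp_of_ray {φ : ℝ} {f : ℂ → F}
    (hf : IntegrableOn (fun r : ℝ => exp (φ * I) • f (r * exp (φ * I))) (Ioi 0)) :
    Integrable fun x : ℝ => exp (x + φ * I) • f (exp (x + φ * I)) := by
  rw [← image_exp_univ, integrableOn_image_iff_integrableOn_abs_deriv_smul MeasurableSet.univ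
    (fun x _ => (Real.hasDerivAt_exp x).hasDerivWithinAt) Real.exp_injective.injOn,
    integrableOn_univ] at hf
  refine hf.congr (ae_of_all _ fun x => ?_)
  simp only [Real.abs_exp, ofReal_exp, exp_add]
  rw [mul_smul, ← ofReal_exp]
  exact (coe_smul _ _).symm

/-- Cauchy theorem: all ray integrals of a holomorphic `O((1 + ‖z‖)⁻²)` function on a sector
agree. -/
lemma rayIntegral_eq_of_differentiableOn {f : ℂ → F} {θ φ₁ φ₂ C : ℝ} [CompleteSpace F]
    (hθ : θ < Real.pi) (h₁ : |φ₁| ≤ θ) (h₂ : |φ₂| ≤ θ) (hf : DifferentiableOn ℂ f (Sector θ))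
    (hC : ∀ z ∈ Sector θ, (1 + ‖z‖) ^ 2 * ‖f z‖ ≤ C) :
    rayIntegral φ₁ 0 f = rayIntegral φ₂ 0 f := by
  set g : ℂ → F := fun w => exp w • f (exp w) with hg
  have hexp : ∀ w : ℂ, |w.im| ≤ θ → exp w ∈ Sector θ := fun w => exp_mem_sector hθ
  have hgd : DifferentiableOn ℂ g {w | |w.im| ≤ θ} :=
    differentiable_exp.differentiableOn.smul
      (hf.comp differentiable_exp.differentiableOn hexp)
  have him : ∀ y ∈ uIcc φ₁ φ₂, |y| ≤ θ := fun y hy =>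
    abs_le.2 (uIcc_subset_Icc (abs_le.1 h₁) (abs_le.1 h₂) hy)
  have hbound : ∀ x y : ℝ, |y| ≤ θ → ‖g (x + y * I)‖ ≤ C * Real.exp (-|x|) := by
    intro x y hy
    have h := hC _ (hexp (x + y * I) (by simpa using hy))
    have hn : ‖exp (x + y * I)‖ = Real.exp x := by rw [norm_exp]; simp
    rw [hn] at h
    rw [hg]
    simp only [norm_smul, hn]
    rw [Real.exp_neg, ← div_eq_mul_inv, le_div_iff₀ (Real.exp_pos _)]
    refine le_trans ?_ h
    rw [mul_right_comm]
    gcongr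
    rcases le_total 0 x with hx | hx
    · rw [abs_of_nonneg hx]
      nlinarith [Real.exp_pos x]
    · rw [abs_of_nonpos hx, ← Real.exp_add, add_neg_cancel, Real.exp_zero]
      nlinarith [Real.exp_pos x]
  have hvert : ∀ ε : ℝ, |ε| = 1 →
      Tendsto (fun T : ℝ => ∫ y in φ₁..φ₂, g ((ε * T : ℝ) + y * I)) atTop (𝓝 0) := by
    intro ε hε
    have hlim : Tendsto (fun T : ℝ => C * Real.exp (-|ε * T|) * |φ₂ - φ₁|) atTop (𝓝 0) := by
      have : Tendsto (fun T : ℝ => C * Real.exp (-|T|) * |φ₂ - φ₁|) atTop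
          (𝓝 (C * 0 * |φ₂ - φ₁|)) :=
        ((Real.tendsto_exp_neg_atTop_nhds_zero.comp tendsto_abs_atTop_atTop).const_mul
          C).mul_const _
      simpa [abs_mul, hε] using this
    refine squeeze_zero_norm (fun T => ?_) hlim
    exact intervalIntegral.norm_integral_le_of_norm_le_const fun y hy =>
      hbound _ y (him y (uIoc_subset_uIcc hy))
  have hhor : ∀ φ : ℝ, |φ| ≤ θ →
      Tendsto (fun T : ℝ => ∫ x in (-T)..T, g (x + φ * I)) atTop (𝓝 (rayIntegral φ 0 f)) := by
    intro φ hφ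
    rw [rayIntegral_eq_integral_exp]
    exact intervalIntegral_tendsto_integral
      (integrable_exp_of_ray (integrableOn_ray hθ hφ hf.continuousOn hC))
      tendsto_neg_atTop_atBot tendsto_id
  have hrect : ∀ T : ℝ, (∫ x in (-T)..T, g (x + φ₁ * I)) - (∫ x in (-T)..T, g (x + φ₂ * I)) +
      I • (∫ y in φ₁..φ₂, g ((1 * T : ℝ) + y * I)) -
      I • (∫ y in φ₁..φ₂, g ((-1 * T : ℝ) + y * I)) = 0 := by
    intro T
    have := integral_boundary_rect_eq_zero_of_differentiableOn g ⟨-T, φ₁⟩ ⟨T, φ₂⟩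
      (hgd.mono fun w hw => him _ hw.2)
    simpa using this
  have hlim := (((hhor φ₁ h₁).sub (hhor φ₂ h₂)).add ((hvert 1 (by simp)).const_smul I)).sub
    ((hvert (-1) (by simp)).const_smul I)
  have := tendsto_nhds_unique (hlim.congr hrect) tendsto_const_nhds
  simpa [sub_eq_zero] using this

end RayIntegrals

section ScalarIntegral

lemma two_div_one_sub_sq_bound {z : ℂ} {M : ℝ} (hM : 0 ≤ M)
    (h₁ : (1 + ‖z‖) * ‖(1 + z)⁻¹‖ ≤ M) (h₂ : (1 + ‖z‖) * ‖(1 - z)⁻¹‖ ≤ M) :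
    (1 + ‖z‖) ^ 2 * ‖2 * ((1 + z)⁻¹ * (1 - z)⁻¹)‖ ≤ 2 * (M * M) := by
  rw [norm_mul, norm_mul, Complex.norm_two]
  calc _ = 2 * (((1 + ‖z‖) * ‖(1 + z)⁻¹‖) * ((1 + ‖z‖) * ‖(1 - z)⁻¹‖)) := by ring
    _ ≤ _ := by gcongr

lemma exists_bound_on_ray {θ : ℝ} (h0 : 0 < θ) (hθ : θ < Real.pi) :
    ∃ M : ℝ, 0 ≤ M ∧ ∀ r : ℝ, 0 < r →
      (1 + r * exp (θ * I) ≠ 0 ∧ (1 + r) * ‖(1 + r * exp (θ * I))⁻¹‖ ≤ M) ∧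
      (1 - r * exp (θ * I) ≠ 0 ∧ (1 + r) * ‖(1 - r * exp (θ * I))⁻¹‖ ≤ M) := by
  obtain ⟨M, hM0, hM⟩ := exists_bound_inv_one_add (θ := max θ (Real.pi - θ))
    (le_max_of_le_left h0.le) (max_lt hθ (by linarith))
  have hmax : max θ (Real.pi - θ) < Real.pi := max_lt hθ (by linarith)
  refine ⟨M, hM0, fun r hr => ⟨?_, ?_⟩⟩
  · have := hM _ (ofReal_mul_exp_mem_sector hmax
      (by rw [abs_of_pos h0]; exact le_max_left _ _) hr)
    rwa [norm_ofReal_mul_exp _ hr.le] at this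
  · have := hM _ (ofReal_mul_exp_mem_sector (φ := θ - Real.pi) hmax
      (by rw [abs_of_neg (by linarith), neg_sub]; exact le_max_right _ _) hr)
    rwa [norm_ofReal_mul_exp _ hr.le, ← neg_mul_exp, ← sub_eq_add_neg] at this

lemma integrableOn_two_div_one_sub_sq {θ : ℝ} (h0 : 0 < θ) (hθ : θ < Real.pi) :
    IntegrableOn (fun r : ℝ => exp (θ * I) • (2 * ((1 + r * exp (θ * I))⁻¹ *
      (1 - r * exp (θ * I))⁻¹))) (Ioi 0) := by
  obtain ⟨M, hM0, hM⟩ := exists_bound_on_ray h0 hθ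
  refine integrableOn_Ioi_of_norm_le (C := 2 * (M * M)) ?_ fun r (hr : 0 < r) => ?_
  · have h1 : ContinuousOn (fun r : ℝ => (1 + r * exp (θ * I))⁻¹) (Ioi 0) :=
      ContinuousOn.inv₀ (by fun_prop) fun r hr => (hM r hr).1.1
    have h2 : ContinuousOn (fun r : ℝ => (1 - r * exp (θ * I))⁻¹) (Ioi 0) :=
      ContinuousOn.inv₀ (by fun_prop) fun r hr => (hM r hr).2.1
    simp only [smul_eq_mul]
    exact continuousOn_const.mul (continuousOn_const.mul (h1.mul h2))
  · rw [norm_smul, norm_exp_ofReal_mul_I, one_mul]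
    have h := two_div_one_sub_sq_bound (z := r * exp (θ * I)) hM0
    rw [norm_ofReal_mul_exp _ hr.le] at h
    exact h (hM r hr).1.2 (hM r hr).2.2

lemma rayIntegral_two_div_one_sub_sq {θ : ℝ} (h0 : 0 < θ) (hθ : θ < Real.pi) :
    rayIntegral θ 0 (fun z : ℂ => 2 * ((1 + z)⁻¹ * (1 - z)⁻¹)) = Real.pi * I := by
  obtain ⟨M, hM0, hM⟩ := exists_bound_on_ray h0 hθ
  set e := exp (θ * I) with he
  have heim : 0 < e.im := by
    rw [he, exp_ofReal_mul_I_im]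
    exact Real.sin_pos_of_pos_of_lt_pi h0 hθ
  set u : ℝ → ℂ := fun r => (1 + r * e) / (1 - r * e) with hu
  have hne : ∀ r : ℝ, 0 ≤ r → 1 + r * e ≠ 0 ∧ 1 - r * e ≠ 0 := by
    intro r hr
    rcases hr.eq_or_lt with rfl | hr
    · simp
    · exact ⟨(hM r hr).1.1, (hM r hr).2.1⟩
  have huim : ∀ r : ℝ, 0 < r → 0 < (u r).im := by
    intro r hr
    have hn : 0 < normSq (1 - r * e) := normSq_pos.2 (hne r hr.le).2
    have : (u r).im = 2 * (r * e.im) / normSq (1 - r * e) := by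
      simp only [hu, div_im]
      rw [← sub_div]
      congr 1
      simp
      ring
    rw [this]
    positivity
  have hslit : ∀ r : ℝ, 0 ≤ r → u r ∈ slitPlane := by
    intro r hr
    rcases hr.eq_or_lt with rfl | hr
    · simp [hu]
    · exact Or.inr (huim r hr).ne'
  have hderiv : ∀ r ∈ Ici (0 : ℝ), HasDerivAt (fun r => log (u r))
      (e • (2 * ((1 + r * e)⁻¹ * (1 - r * e)⁻¹))) r := by
    intro r hr
    have hlin : HasDerivAt (fun r : ℝ => (r : ℂ) * e) e r := by
      simpa using (hasDerivAt_id r).ofReal_comp.mul_const e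
    have hd : HasDerivAt u ((e * (1 - r * e) - (1 + r * e) * -e) / (1 - r * e) ^ 2) r :=
      (hlin.const_add 1).div (hlin.const_sub 1) (hne r hr).2
    have h1 := (hne r hr).1
    have h2 := (hne r hr).2
    convert hd.clog_real (hslit r hr) using 1
    simp only [hu, smul_eq_mul]
    field_simp
    ring
  have hulim : Tendsto u atTop (𝓝[{z : ℂ | 0 ≤ z.im}] (-1)) := by
    refine tendsto_nhdsWithin_iff.2 ⟨?_, ?_⟩
    · have h2 : Tendsto (fun r : ℝ => u r - (-1)) atTop (𝓝 0) := by
        have hz : Tendsto (fun r : ℝ => 2 * (M / (1 + r))) atTop (𝓝 0) := by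
          simpa using (tendsto_const_nhds (x := M)).div_atTop
            (tendsto_atTop_add_const_left _ 1 tendsto_id) |>.const_mul (2 : ℝ)
        refine squeeze_zero_norm' ?_ hz
        filter_upwards [eventually_gt_atTop 0] with r hr
        have : u r - (-1) = 2 * (1 - r * e)⁻¹ := by
          have := (hne r hr.le).2
          simp only [hu]
          field_simp
          ring
        rw [this, norm_mul, Complex.norm_two]
        gcongr
        rw [le_div_iff₀ (by positivity), mul_comm]
        exact (hM r hr).2.2
      simpa using h2.add_const (-1)
    · filter_upwards [eventually_gt_atTop 0] with r hr using (huim r hr).le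
  have hlog : Tendsto (fun r => log (u r)) atTop (𝓝 (Real.pi * I)) := by
    have := (tendsto_log_nhdsWithin_im_nonneg_of_re_neg_of_im_zero (z := -1)
      (by simp) (by simp)).comp hulim
    simpa [Function.comp_def] using this
  have := integral_Ioi_of_hasDerivAt_of_tendsto' hderiv
    (integrableOn_two_div_one_sub_sq h0 hθ) hlog
  rw [rayIntegral, this]
  simp [hu]

lemma neg_exp_neg_angle (r θ : ℝ) :
    -(r * exp ((-θ : ℝ) * I) : ℂ) = r * exp ((Real.pi - θ : ℝ) * I) := by
  rw [neg_eq_iff_eq_neg, neg_mul_exp, sub_sub_cancel_left]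

lemma exp_neg_angle (θ : ℝ) : exp ((-θ : ℝ) * I) = -exp ((Real.pi - θ : ℝ) * I) := by
  simpa using congrArg Neg.neg (neg_exp_neg_angle 1 θ)

lemma one_add_sub_ne_zero_on_ray {θ : ℝ} (h0 : 0 < θ) (hθ : θ < Real.pi) (r : ℝ) (hr : 0 < r) :
    1 + r * exp (θ * I) ≠ 0 ∧ 1 - r * exp (θ * I) ≠ 0 := by
  obtain ⟨M, -, hM⟩ := exists_bound_on_ray h0 hθ
  exact ⟨(hM r hr).1.1, (hM r hr).2.1⟩

lemma exp_smul_two_div_one_sub_sq_neg_angle (θ r : ℝ) :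
    exp ((-θ : ℝ) * I) • (2 * ((1 + r * exp ((-θ : ℝ) * I))⁻¹ *
      (1 - r * exp ((-θ : ℝ) * I))⁻¹)) =
    -(exp ((Real.pi - θ : ℝ) * I) • (2 * ((1 + r * exp ((Real.pi - θ : ℝ) * I))⁻¹ *
      (1 - r * exp ((Real.pi - θ : ℝ) * I))⁻¹))) := by
  simp only [exp_neg_angle, smul_eq_mul, mul_neg, sub_neg_eq_add, ← sub_eq_add_neg]
  ring

lemma integrableOn_two_div_one_sub_sq_neg_angle {θ : ℝ} (h0 : 0 < θ) (hθ : θ < Real.pi) :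
    IntegrableOn (fun r : ℝ => exp ((-θ : ℝ) * I) • (2 * ((1 + r * exp ((-θ : ℝ) * I))⁻¹ *
      (1 - r * exp ((-θ : ℝ) * I))⁻¹))) (Ioi 0) := by
  simp only [exp_smul_two_div_one_sub_sq_neg_angle]
  exact (integrableOn_two_div_one_sub_sq (by linarith) (by linarith)).neg

lemma rayIntegral_neg_angle_two_div_one_sub_sq {θ : ℝ} (h0 : 0 < θ) (hθ : θ < Real.pi) :
    rayIntegral (-θ) 0 (fun z : ℂ => 2 * ((1 + z)⁻¹ * (1 - z)⁻¹)) = -(Real.pi * I) := by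
  rw [← rayIntegral_two_div_one_sub_sq (θ := Real.pi - θ) (by linarith) (by linarith), rayIntegral,
    rayIntegral, ← integral_neg]
  simp only [exp_smul_two_div_one_sub_sq_neg_angle]

end ScalarIntegral

section Resolvents

variable {A : E →ₗ.[ℂ] E} {θ K : ℝ} {R : ℂ → E →L[ℂ] E}

lemma IsSectorial.resolvent_identity_apply (h : IsSectorial A θ R K) {z w : ℂ}
    (hz : z ∈ Sector θ) (hw : w ∈ Sector θ) (y : E) :
    R w y = R z y + (z - w) • R z (R w y) := by
  have h1 := (h.res z hz).left_inv ⟨R w y, (h.res w hw).mem y⟩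
  rw [eq_sub_of_add_eq ((h.res w hw).right_inv y)] at h1
  simp only [map_add, map_sub, map_smul] at h1
  rw [sub_smul]
  nth_rewrite 1 [← h1]
  abel

lemma IsSectorial.resolvent_identity (h : IsSectorial A θ R K) {z w : ℂ} (hz : z ∈ Sector θ)
    (hw : w ∈ Sector θ) : R w = R z + (z - w) • (R z * R w) :=
  ContinuousLinearMap.ext (h.resolvent_identity_apply hz hw)

/-- An operator commuting with one resolvent commutes with all of them. -/
lemma IsSectorial.commute_resolvent (h : IsSectorial A θ R K) {T : E →L[ℂ] E} {z w : ℂ}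
    (hz : z ∈ Sector θ) (hw : w ∈ Sector θ) (hT : Commute T (R z)) : Commute T (R w) := by
  have h1 := h.resolvent_identity hz hw
  have h2 := h.resolvent_identity hw hz
  set c := z - w with hc
  have h2' : R w = R z + c • (R w * R z) := by
    rw [hc, ← neg_sub w z, neg_smul, ← sub_eq_add_neg]
    exact eq_sub_of_add_eq h2.symm
  let u : (E →L[ℂ] E)ˣ :=
    { val := 1 - c • R z
      inv := 1 + c • R w
      val_inv := by
        have : c • R w = c • R z + c • R z * c • R w := by
          rw [smul_mul_smul_comm, mul_smul, ← smul_add, ← h1]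
        rw [mul_add, mul_one, sub_mul, one_mul]
        calc _ = 1 + (c • R w - (c • R z + c • R z * c • R w)) := by abel
          _ = 1 := by rw [← this, sub_self, add_zero]
      inv_val := by
        have : c • R w = c • R z + c • R w * c • R z := by
          rw [smul_mul_smul_comm, mul_smul, ← smul_add, ← h2']
        rw [add_mul, one_mul, mul_sub, mul_one]
        calc _ = 1 + (c • R w - (c • R z + c • R w * c • R z)) := by abel
          _ = 1 := by rw [← this, sub_self, add_zero] }
  have hu : Commute T (u : E →L[ℂ] E) := (Commute.one_right T).sub_right (hT.smul_right c)
  have hS : Commute T (1 + c • R w) := hu.units_inv_right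
  have hR : R w = R z * (1 + c • R w) := by
    rw [mul_add, mul_one, mul_smul_comm, ← h1]
  rw [hR]
  exact hT.mul_right hS

lemma IsSectorial.norm_le (h : IsSectorial A θ R K) {z : ℂ} (hz : z ∈ Sector θ) : ‖R z‖ ≤ K := by
  refine le_trans ?_ (h.bound z hz)
  nlinarith [norm_nonneg z, norm_nonneg (R z), mul_nonneg (norm_nonneg z) (norm_nonneg (R z))]

lemma IsSectorial.continuousOn (h : IsSectorial A θ R K) : ContinuousOn R (Sector θ) := by
  have hK : 0 ≤ K := zero_le_one.trans h.one_le
  refine (LipschitzOnWith.of_dist_le_mul (K := (K * K).toNNReal) fun z hz w hw => ?_).continuousOn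
  rw [dist_eq_norm, dist_eq_norm, h.resolvent_identity hw hz, add_sub_cancel_left,
    norm_smul, norm_sub_rev, mul_comm, Real.coe_toNNReal _ (by positivity)]
  gcongr
  exact (norm_mul_le _ _).trans (mul_le_mul (h.norm_le hw) (h.norm_le hz) (norm_nonneg _) hK)

lemma IsSectorial.differentiableOn (h : IsSectorial A θ R K) :
    DifferentiableOn ℂ R (Sector θ) := by
  intro w hw
  refine HasDerivWithinAt.differentiableWithinAt (f' := -(R w * R w)) ?_
  rw [hasDerivWithinAt_iff_tendsto_slope]
  have hlim : Tendsto (fun z => -(R w * R z)) (𝓝[Sector θ \ {w}] w) (𝓝 (-(R w * R w))) :=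
    (((h.continuousOn w hw).mono sdiff_subset).tendsto.const_mul (R w)).neg
  refine hlim.congr' ?_
  filter_upwards [self_mem_nhdsWithin] with z hz
  have hne : z - w ≠ 0 := sub_ne_zero.2 hz.2
  have hzw : R z - R w = (w - z) • (R w * R z) := by
    rw [sub_eq_iff_eq_add']
    exact h.resolvent_identity hw hz.1
  rw [slope_def_module, hzw, smul_smul, ← neg_sub z w, mul_neg, inv_mul_cancel₀ hne, neg_one_smul]

/-- The function `((A + z)⁻¹ - (1 + z)⁻¹ A⁻¹) y / z`, written without the removable singularity. -/
def regularizedResolvent (R : ℂ → E →L[ℂ] E) (y : E) (z : ℂ) : E :=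
  (1 + z)⁻¹ • R 0 y - R z (R 0 y)

lemma zero_mem_sector (hθ : 0 ≤ θ) : (0 : ℂ) ∈ Sector θ := by
  simpa [Sector] using hθ

lemma IsSectorial.smul_regularizedResolvent (h : IsSectorial A θ R K) (hθ : 0 ≤ θ) {z : ℂ}
    (hz : z ∈ Sector θ) (hz1 : 1 + z ≠ 0) (y : E) :
    z • regularizedResolvent R y z = R z y - (1 + z)⁻¹ • R 0 y := by
  have h1 := h.resolvent_identity_apply hz (zero_mem_sector hθ) y
  rw [sub_zero] at h1
  have h2 : z * (1 + z)⁻¹ = 1 - (1 + z)⁻¹ := by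
    field_simp
    ring
  rw [regularizedResolvent, smul_sub, smul_smul, h2, sub_smul, one_smul]
  nth_rewrite 1 [h1]
  abel

lemma IsSectorial.differentiableOn_regularizedResolvent (h : IsSectorial A θ R K) (hθ0 : 0 ≤ θ)
    (hθ : θ < Real.pi) (y : E) : DifferentiableOn ℂ (regularizedResolvent R y) (Sector θ) := by
  obtain ⟨M, -, hM⟩ := exists_bound_inv_one_add hθ0 hθ
  have h1 : DifferentiableOn ℂ (fun z : ℂ => (1 + z)⁻¹) (Sector θ) :=
    DifferentiableOn.inv (by fun_prop) fun z hz => (hM z hz).1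
  exact (h1.smul_const _).sub (h.differentiableOn.clm_apply (differentiableOn_const _))

lemma IsSectorial.exists_bound_regularizedResolvent (h : IsSectorial A θ R K) (hθ0 : 0 ≤ θ)
    (hθ : θ < Real.pi) (y : E) :
    ∃ C, ∀ z ∈ Sector θ, (1 + ‖z‖) ^ 2 * ‖regularizedResolvent R y z‖ ≤ C := by
  obtain ⟨M, -, hM⟩ := exists_bound_inv_one_add hθ0 hθ
  have aux : ∀ z ∈ Sector θ, ∀ a b : E,
      (1 + ‖z‖) * ‖(1 + z)⁻¹ • a - R z b‖ ≤ M * ‖a‖ + K * ‖b‖ := by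
    intro z hz a b
    calc (1 + ‖z‖) * ‖(1 + z)⁻¹ • a - R z b‖
        ≤ (1 + ‖z‖) * (‖(1 + z)⁻¹‖ * ‖a‖ + ‖R z‖ * ‖b‖) := by
          gcongr
          refine (norm_sub_le _ _).trans (add_le_add (norm_smul_le _ _) ((R z).le_opNorm b))
      _ = (1 + ‖z‖) * ‖(1 + z)⁻¹‖ * ‖a‖ + (1 + ‖z‖) * ‖R z‖ * ‖b‖ := by ring
      _ ≤ _ := by
          gcongr
          exacts [(hM z hz).2, h.bound z hz]
  refine ⟨(M * ‖R 0 y‖ + K * ‖R 0 y‖) + (M * ‖R 0 y‖ + K * ‖y‖), fun z hz => ?_⟩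
  have h1 := aux z hz (R 0 y) (R 0 y)
  have h2 := aux z hz (R 0 y) y
  rw [norm_sub_rev, ← h.smul_regularizedResolvent hθ0 hz (hM z hz).1, norm_smul] at h2
  rw [← regularizedResolvent] at h1
  linarith

end Resolvents

section SumOfInverses

variable {A B : E →ₗ.[ℂ] E} {θA θB KA KB : ℝ} {RA RB : ℂ → E →L[ℂ] E}

/-- Applying `A⁻¹ + B⁻¹` to the integrand of `𝒦` splits it into a part holomorphic in the sector of
`-A`, a part holomorphic in the sector of `B`, and a scalar rational part. -/
lemma add_inv_integrand_eq (hA : IsSectorial A θA RA KA) (hB : IsSectorial B θB RB KB)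
    (hθA : 0 ≤ θA) (hθB : 0 ≤ θB)
    (hcomm : ∀ z ∈ Sector θA, ∀ w ∈ Sector θB, Commute (RA z) (RB w)) {z : ℂ}
    (hzA : -z ∈ Sector θA) (hzB : z ∈ Sector θB) (h₁ : 1 + z ≠ 0) (h₂ : 1 - z ≠ 0) (w : E) :
    RA 0 (RA (-z) (RB z w)) + RB 0 (RA (-z) (RB z w)) =
      (2 * ((1 + z)⁻¹ * (1 - z)⁻¹)) • RA 0 (RB 0 w) -
        regularizedResolvent RA (RB 0 w) (-z) - regularizedResolvent RB (RA 0 w) z := by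
  have h0A := zero_mem_sector hθA
  have h0B := zero_mem_sector hθB
  have comm : ∀ u ∈ Sector θA, ∀ v ∈ Sector θB, ∀ y, RB v (RA u y) = RA u (RB v y) :=
    fun u hu v hv y => congrArg (fun T => T y) (hcomm u hu v hv).eq.symm
  have commA : ∀ y, RA 0 (RA (-z) y) = RA (-z) (RA 0 y) := fun y =>
    congrArg (fun T => T y) (hA.commute_resolvent h0A hzA (Commute.refl (RA 0))).eq
  have idB := congrArg (fun y => RA (-z) (RA 0 y)) (hB.resolvent_identity_apply hzB h0B w)
  have idA := hA.resolvent_identity_apply hzA h0A (RB z (RB 0 w))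
  have commB : RB 0 (RB z w) = RB z (RB 0 w) :=
    congrArg (fun T => T w) (hB.commute_resolvent h0B hzB (Commute.refl (RB 0))).eq
  simp only [map_add, map_smul, sub_zero] at idA idB
  have hs : 2 * ((1 + z)⁻¹ * (1 - z)⁻¹) = (1 + -z)⁻¹ + (1 + z)⁻¹ := by
    rw [← sub_eq_add_neg]
    field_simp
    ring
  rw [regularizedResolvent, regularizedResolvent, hs, add_smul, commA, comm _ hzA _ h0B, commB,
    comm _ h0A _ h0B, comm _ h0A _ hzB, idA, idB]
  module

/-- The contribution of a single ray to `(A⁻¹ + B⁻¹) 𝒦 w`. -/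
lemma add_inv_rayIntegral_eq [CompleteSpace E] (hA : IsSectorial A θA RA KA)
    (hB : IsSectorial B θB RB KB) (hθA : θA < Real.pi) (hθA0 : 0 ≤ θA) (hθB : θB < Real.pi)
    (hθB0 : 0 ≤ θB) (hcomm : ∀ z ∈ Sector θA, ∀ w ∈ Sector θB, Commute (RA z) (RB w))
    {φ ψ : ℝ} (hφ : |φ| ≤ θB) (hψ : |ψ| ≤ θA) (hψφ : ∀ r : ℝ, -(r * exp (φ * I)) = r * exp (ψ * I))
    (hne : ∀ r : ℝ, 0 < r → 1 + r * exp (φ * I) ≠ 0 ∧ 1 - r * exp (φ * I) ≠ 0)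
    (hint : IntegrableOn (fun r : ℝ => exp (φ * I) • (2 * ((1 + r * exp (φ * I))⁻¹ *
      (1 - r * exp (φ * I))⁻¹))) (Ioi 0)) (w : E) :
    RA 0 (rayIntegral φ 0 fun z => RA (-z) (RB z w)) +
      RB 0 (rayIntegral φ 0 fun z => RA (-z) (RB z w)) =
    rayIntegral φ 0 (fun z : ℂ => 2 * ((1 + z)⁻¹ * (1 - z)⁻¹)) • RA 0 (RB 0 w) +
      rayIntegral ψ 0 (regularizedResolvent RA (RB 0 w)) -
      rayIntegral φ 0 (regularizedResolvent RB (RA 0 w)) := by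
  have hmB : ∀ r ∈ Ioi (0 : ℝ), (r * exp (φ * I) : ℂ) ∈ Sector θB := fun r hr =>
    ofReal_mul_exp_mem_sector hθB hφ hr
  have hmA : ∀ r ∈ Ioi (0 : ℝ), -(r * exp (φ * I) : ℂ) ∈ Sector θA := fun r hr => by
    rw [hψφ]
    exact ofReal_mul_exp_mem_sector hθA hψ hr
  have hexp : exp (φ * I) = -exp (ψ * I) := by
    have := hψφ 1
    rw [ofReal_one, one_mul, one_mul] at this
    rw [← this, neg_neg]
  have hKop : IntegrableOn (fun r : ℝ => exp (φ * I) •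
      RA (-(r * exp (φ * I))) (RB (r * exp (φ * I)) w)) (Ioi 0) := by
    refine integrableOn_Ioi_of_norm_le (C := KA * KB * ‖w‖) ?_ fun r hr => ?_
    · refine ContinuousOn.const_smul ?_ _
      exact (hA.continuousOn.comp (by fun_prop) hmA).clm_apply
        ((hB.continuousOn.comp (by fun_prop) hmB).clm_apply continuousOn_const)
    · have h1 := hA.bound _ (hmA r hr)
      have h2 := hB.bound _ (hmB r hr)
      have hr' : 0 < r := hr
      have hKA : 0 ≤ KA := zero_le_one.trans hA.one_le
      rw [norm_neg, norm_ofReal_mul_exp _ hr'.le] at h1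
      rw [norm_ofReal_mul_exp _ hr'.le] at h2
      rw [norm_smul, norm_exp_ofReal_mul_I, one_mul]
      calc _ ≤ (1 + r) ^ 2 * (‖RA (-(r * exp (φ * I)))‖ * (‖RB (r * exp (φ * I))‖ * ‖w‖)) := by
            gcongr
            exact (ContinuousLinearMap.le_opNorm _ _).trans
              (mul_le_mul_of_nonneg_left (ContinuousLinearMap.le_opNorm _ _) (norm_nonneg _))
        _ = ((1 + r) * ‖RA (-(r * exp (φ * I)))‖) * ((1 + r) * ‖RB (r * exp (φ * I))‖) * ‖w‖ := by
            ring
        _ ≤ _ := by gcongr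
  obtain ⟨CA, hCA⟩ := hA.exists_bound_regularizedResolvent hθA0 hθA (RB 0 w)
  obtain ⟨CB, hCB⟩ := hB.exists_bound_regularizedResolvent hθB0 hθB (RA 0 w)
  have hiA := integrableOn_ray hθA hψ
    (hA.differentiableOn_regularizedResolvent hθA0 hθA (RB 0 w)).continuousOn hCA
  have hiB := integrableOn_ray hθB hφ
    (hB.differentiableOn_regularizedResolvent hθB0 hθB (RA 0 w)).continuousOn hCB
  have hiS : IntegrableOn (fun r : ℝ => (exp (φ * I) • (2 * ((1 + r * exp (φ * I))⁻¹ *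
      (1 - r * exp (φ * I))⁻¹))) • RA 0 (RB 0 w) +
      exp (ψ * I) • regularizedResolvent RA (RB 0 w) (r * exp (ψ * I))) (Ioi 0) :=
    (hint.smul_const _).add hiA
  simp only [rayIntegral]
  rw [← ContinuousLinearMap.integral_comp_comm _ hKop,
    ← ContinuousLinearMap.integral_comp_comm _ hKop,
    ← integral_add ((RA 0).integrable_comp hKop) ((RB 0).integrable_comp hKop),
    ← integral_smul_const, ← integral_add (hint.smul_const _) hiA,
    ← integral_sub hiS hiB]
  refine setIntegral_congr_fun measurableSet_Ioi fun r hr => ?_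
  have key := add_inv_integrand_eq hA hB hθA0 hθB0 hcomm (hmA r hr) (hmB r hr)
    (hne r hr).1 (hne r hr).2 w
  simp only [map_smul]
  rw [← smul_add, key, hψφ, hexp]
  module

end SumOfInverses

/-- For every `w ∈ E`, `A⁻¹B⁻¹ w = (A⁻¹ + B⁻¹) 𝒦 w`, where `A⁻¹ = RA 0`, `B⁻¹ = RB 0`
(note `0 ∈ S_θ ⊆ ρ(-A), ρ(-B)`). -/
theorem inv_inv_eq_add_inv_Kop
    [CompleteSpace E]
    (θA θB KA KB : ℝ) (hθA : θA < Real.pi) (hBA : θB < θA) (hsum : Real.pi < θA + θB)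
    (A B : E →ₗ.[ℂ] E) (RA RB : ℂ → E →L[ℂ] E)
    (hA : IsSectorial A θA RA KA) (hB : IsSectorial B θB RB KB)
    (hcomm : ResolventCommuting RA RB θA θB)
    (w : E) :
    RA 0 (RB 0 w) = RA 0 (Kop RA RB θB w) + RB 0 (Kop RA RB θB w) := by
  have hθB0 : 0 < θB := by linarith
  have hθA0 : 0 < θA := by linarith
  have hθB : θB < Real.pi := by linarith
  have hcomm' : ∀ z ∈ Sector θA, ∀ w ∈ Sector θB, Commute (RA z) (RB w) := by
    obtain ⟨lam, hlam, mu, hmu, h⟩ := hcomm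
    exact fun z hz w hw => hB.commute_resolvent hmu hw
      (hA.commute_resolvent hlam hz h.symm).symm
  obtain ⟨CA, hCA⟩ := hA.exists_bound_regularizedResolvent hθA0.le hθA (RB 0 w)
  obtain ⟨CB, hCB⟩ := hB.exists_bound_regularizedResolvent hθB0.le hθB (RA 0 w)
  have habs₁ : |θB| ≤ θB := (abs_of_pos hθB0).le
  have habs₂ : |-θB| ≤ θB := (abs_neg θB).trans_le habs₁
  have habs₃ : |θB - Real.pi| ≤ θA := abs_le.2 ⟨by linarith, by linarith⟩
  have habs₄ : |Real.pi - θB| ≤ θA := abs_le.2 ⟨by linarith, by linarith⟩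
  have hpos := add_inv_rayIntegral_eq hA hB hθA hθA0.le hθB hθB0.le hcomm' habs₁ habs₃
    (fun r => neg_mul_exp r θB) (one_add_sub_ne_zero_on_ray hθB0 hθB)
    (integrableOn_two_div_one_sub_sq hθB0 hθB) w
  have hneg := add_inv_rayIntegral_eq hA hB hθA hθA0.le hθB hθB0.le hcomm' habs₂ habs₄
    (fun r => by rw [neg_exp_neg_angle])
    (fun r hr => by
      have := one_add_sub_ne_zero_on_ray (θ := Real.pi - θB) (by linarith) (by linarith) r hr
      rw [← neg_exp_neg_angle, sub_neg_eq_add, ← sub_eq_add_neg] at this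
      exact this.symm)
    (integrableOn_two_div_one_sub_sq_neg_angle hθB0 hθB) w
  rw [rayIntegral_two_div_one_sub_sq hθB0 hθB] at hpos
  rw [rayIntegral_neg_angle_two_div_one_sub_sq hθB0 hθB,
    rayIntegral_eq_of_differentiableOn hθA habs₄ habs₃
      (hA.differentiableOn_regularizedResolvent hθA0.le hθA (RB 0 w)) hCA,
    rayIntegral_eq_of_differentiableOn hθB habs₂ habs₁
      (hB.differentiableOn_regularizedResolvent hθB0.le hθB (RA 0 w)) hCB] at hneg
  have hsub := congrArg₂ (fun x y => x - y) hpos hneg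
  rw [Kop, gammaIntegral, map_smul, map_smul, ← smul_add, eq_inv_smul_iff₀ two_pi_I_ne_zero,
    map_sub, map_sub]
  calc _ = _ := ?_
    _ = _ := hsub.symm
    _ = _ := ?_
  · module
  · abel

end
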